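/- arXiv:1804.08011 — 2 statements merged into one kernel-verified Lean document; each statement's English description precedes it below -/
import Mathlib

section
/- Let R be a commutative ring and consider the polynomial ring R[x₀,…,x_a]. For all indices 0 ≤ i, j, k, l ≤ a with i + j = k + l, the binomial x_i x_j − x_k x_l lies in the ideal I₂(MX) generated by the 2×2 minors of the matrix MX with rows (x₀,…,x_{a−1}) and (x₁,…,x_a). -/
open MvPolynomial

noncomputable section

/-- The ideal generated by the 2×2 minors of the Hankel matrix `MX` with rows
`(x₀,…,x_{a−1})` and `(x₁,…,x_a)`, inside `R[x₀,…,x_a]`. -/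
def I2MX (R : Type*) [CommRing R] (a : ℕ) : Ideal (MvPolynomial (Fin (a + 1)) R) :=
  Ideal.span { f | ∃ c c' : Fin a,
    f = X c.castSucc * X c'.succ - X c'.castSucc * X c.succ }

theorem I2MX_shift (R : Type*) [CommRing R] (a n : ℕ) : ∀ (i j : ℕ)
    (hi : i + n ≤ a) (hj : j + n ≤ a),
    (X ⟨i + n, by omega⟩ * X ⟨j, by omega⟩ - X ⟨i, by omega⟩ * X ⟨j + n, by omega⟩ :
      MvPolynomial (Fin (a + 1)) R) ∈ I2MX R a := by
  induction n with
  | zero => intro i j hi hj; simp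
  | succ n ih =>
    intro i j hi hj
    have h1 := ih i (j + 1) (by omega) (by omega)
    have h2 : (X ⟨j, by omega⟩ * X ⟨i + n + 1, by omega⟩
        - X ⟨i + n, by omega⟩ * X ⟨j + 1, by omega⟩ :
        MvPolynomial (Fin (a + 1)) R) ∈ I2MX R a :=
      Ideal.subset_span ⟨⟨j, by omega⟩, ⟨i + n, by omega⟩, rfl⟩
    have h3 := add_mem h1 h2
    have e : j + 1 + n = j + (n + 1) := by omega
    simp only [e] at h3
    convert h3 using 1
    simp only [← add_assoc]
    ring

/-- Over a commutative ring `R`, in `R[x₀,…,x_a]`, for all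
indices `0 ≤ i, j, k, l ≤ a` with `i + j = k + l`, the binomial
`x_i·x_j − x_k·x_l` lies in `I₂(MX)`. -/
theorem stmt5 (R : Type*) [CommRing R] (a : ℕ) (i j k l : ℕ)
    (hi : i ≤ a) (hj : j ≤ a) (hk : k ≤ a) (hl : l ≤ a) (hsum : i + j = k + l) :
    (X ⟨i, by omega⟩ * X ⟨j, by omega⟩ - X ⟨k, by omega⟩ * X ⟨l, by omega⟩ :
      MvPolynomial (Fin (a + 1)) R) ∈ I2MX R a := by
  rcases le_total k i with h | h
  · obtain ⟨n, rfl⟩ := Nat.exists_eq_add_of_le h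
    obtain rfl : l = j + n := by omega
    exact I2MX_shift R a n k j hi hl
  · obtain ⟨n, rfl⟩ := Nat.exists_eq_add_of_le h
    obtain rfl : j = l + n := by omega
    have := neg_mem (I2MX_shift R a n i l hk hj)
    rwa [neg_sub] at this

end
end

section
/- Let F be a field, let a, b ≥ 1, and set q = a + b − 2. In P = F[x₀,…,x_a, y₀,…,y_b], for all indices 0 ≤ i < j ≤ a−1 and 0 ≤ s ≤ b−1, both elements x_j·x₀^{q−i−s}x₁^{i+s} − x_i·x₀^{q−j−s}x₁^{j+s} and x_{j+1}·x₀^{q−i−s}x₁^{i+s} − x_{i+1}·x₀^{q−j−s}x₁^{j+s} lie in the ideal I₂(M) generated by the 2×2 minors of the matrix M with rows (x₀,…,x_{a−1}, y₀,…,y_{b−1}) and (x₁,…,x_a, y₁,…,y_b). -/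
open MvPolynomial

noncomputable section

/-- The polynomial ring `P = F[x₀,…,x_a, y₀,…,y_b]`. -/
abbrev KPoly (F : Type*) [CommRing F] (a b : ℕ) : Type _ :=
  MvPolynomial (Fin (a + 1) ⊕ Fin (b + 1)) F

variable (F : Type*) [CommRing F] (a b : ℕ)

/-- The variable `x_i`. -/
def xv (i : Fin (a + 1)) : KPoly F a b := X (Sum.inl i)

/-- The variable `y_j`. -/
def yv (j : Fin (b + 1)) : KPoly F a b := X (Sum.inr j)

/-- The first row `(x₀,…,x_{a−1}, y₀,…,y_{b−1})` of the matrix `M`. -/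
def mrow1 : Fin a ⊕ Fin b → KPoly F a b
  | Sum.inl c => xv F a b c.castSucc
  | Sum.inr c => yv F a b c.castSucc

/-- The second row `(x₁,…,x_a, y₁,…,y_b)` of the matrix `M`. -/
def mrow2 : Fin a ⊕ Fin b → KPoly F a b
  | Sum.inl c => xv F a b c.succ
  | Sum.inr c => yv F a b c.succ

/-- The ideal generated by the 2×2 minors of `M`, i.e. the homogeneous ideal
of the rational normal scroll `S(a,b)`. -/
def I2M : Ideal (KPoly F a b) :=
  Ideal.span { f | ∃ c c' : Fin a ⊕ Fin b,
    f = mrow1 F a b c * mrow2 F a b c' - mrow1 F a b c' * mrow2 F a b c }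

theorem step_mem (F : Type*) [CommRing F] (a b : ℕ) (ha : 1 ≤ a) (k : ℕ) (hk : k < a) :
    xv F a b ⟨k + 1, by omega⟩ * xv F a b ⟨0, by omega⟩
      - xv F a b ⟨k, by omega⟩ * xv F a b ⟨1, by omega⟩ ∈ I2M F a b := by
  refine Ideal.subset_span ⟨Sum.inl ⟨0, by omega⟩, Sum.inl ⟨k, hk⟩, ?_⟩
  simp only [mrow1, mrow2, Fin.castSucc_mk, Fin.succ_mk]
  ring

theorem shift_mem (F : Type*) [CommRing F] (a b : ℕ) (ha : 1 ≤ a) (i d : ℕ) (h : i + d ≤ a) :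
    xv F a b ⟨i + d, by omega⟩ * xv F a b ⟨0, by omega⟩ ^ d
      - xv F a b ⟨i, by omega⟩ * xv F a b ⟨1, by omega⟩ ^ d ∈ I2M F a b := by
  induction d with
  | zero => simp
  | succ d ih =>
    have h1 := Ideal.mul_mem_left _ (xv F a b ⟨0, by omega⟩ ^ d)
      (step_mem F a b ha (i + d) (by omega))
    have h2 := Ideal.mul_mem_left _ (xv F a b ⟨1, by omega⟩) (ih (by omega))
    convert Ideal.add_mem _ h1 h2 using 1
    simp only [← add_assoc]
    ring

theorem binom_mem (F : Type*) [CommRing F] (a b : ℕ) (ha : 1 ≤ a) (i d m n : ℕ)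
    (h : i + d ≤ a) :
    xv F a b ⟨i + d, by omega⟩ * (xv F a b ⟨0, by omega⟩ ^ (m + d) * xv F a b ⟨1, by omega⟩ ^ n)
      - xv F a b ⟨i, by omega⟩ * (xv F a b ⟨0, by omega⟩ ^ m
        * xv F a b ⟨1, by omega⟩ ^ (n + d)) ∈ I2M F a b := by
  convert Ideal.mul_mem_left _ (xv F a b ⟨0, by omega⟩ ^ m * xv F a b ⟨1, by omega⟩ ^ n)
    (shift_mem F a b ha i d h) using 1
  ring

/-- Let `F` be a field, `a, b ≥ 1`, `q = a + b − 2`. For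
`0 ≤ i < j ≤ a−1` and `0 ≤ s ≤ b−1`, both binomials
`x_j·x₀^{q−i−s}x₁^{i+s} − x_i·x₀^{q−j−s}x₁^{j+s}` and
`x_{j+1}·x₀^{q−i−s}x₁^{i+s} − x_{i+1}·x₀^{q−j−s}x₁^{j+s}` lie in `I₂(M)`. -/
theorem stmt6 (F : Type*) [Field F] (a b : ℕ) (ha : 1 ≤ a) (hb : 1 ≤ b)
    (q : ℕ) (hq : q = a + b - 2)
    (i j s : ℕ) (hij : i < j) (hj : j ≤ a - 1) (hs : s ≤ b - 1) :
    (xv F a b ⟨j, by omega⟩ * (xv F a b ⟨0, by omega⟩ ^ (q - i - s)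
          * xv F a b ⟨1, by omega⟩ ^ (i + s))
        - xv F a b ⟨i, by omega⟩ * (xv F a b ⟨0, by omega⟩ ^ (q - j - s)
          * xv F a b ⟨1, by omega⟩ ^ (j + s)) ∈ I2M F a b)
    ∧ (xv F a b ⟨j + 1, by omega⟩ * (xv F a b ⟨0, by omega⟩ ^ (q - i - s)
          * xv F a b ⟨1, by omega⟩ ^ (i + s))
        - xv F a b ⟨i + 1, by omega⟩ * (xv F a b ⟨0, by omega⟩ ^ (q - j - s)
          * xv F a b ⟨1, by omega⟩ ^ (j + s)) ∈ I2M F a b) := by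
  obtain ⟨d, rfl⟩ := Nat.exists_eq_add_of_lt hij
  have e1 : q - i - s = (q - (i + d + 1) - s) + (d + 1) := by omega
  have e2 : i + d + 1 + s = i + s + (d + 1) := by omega
  rw [e1, e2]
  refine ⟨binom_mem F a b ha i (d + 1) _ _ (by omega), ?_⟩
  have := binom_mem F a b ha (i + 1) (d + 1) (q - (i + d + 1) - s) (i + s) (by omega)
  have e3 : i + d + 1 + 1 = i + 1 + (d + 1) := by omega
  simpa only [e3] using this

end
end
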